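/- Let $n \geq 2$, let $\alpha_1,\dots,\alpha_n$ and $m \geq 3$ be integers with $\alpha_j \geq 3$. There exist constants $c, c_1, \dots, c_n > 0$ such that for every $\delta \in (0,1/2)$ the following holds. Define $f(y) = \prod_{j=1}^n f_j(y_j)$ where $f_1(y_1) = e^{-i y_1^m} \chi_{E_1}(y_1)$ with $E_1 = [-c_1 \delta^{-2/m}, c_1\delta^{-2/m}]$, and $f_j(y_j) = \chi_{E_j}(y_j)$ with $E_j = [-c_j \delta^{-\alpha_j/m}, c_j \delta^{-\alpha_j/m}]$ for $2 \leq j \leq n$; and let $R_\delta = \{x \in \mathbb{R}^n : |x_1 - 1| \leq c\delta^2,\ |x_i| \leq c\delta \text{ for } 2 \leq i \leq n\}$. Then for every $x \in R_\delta$, $|T_{\alpha,m}f(x)| \geq \left(\prod_{j=1}^n c_j\right) \delta^{-2/m}\, \delta^{-(\sum_{j=2}^n \alpha_j)/m}$, and consequently $\int_{R_\delta} |T_{\alpha,m}f(x)|^2\, dx \geq \left(\prod_{j=1}^n c_j\right)^2 (2c)^{n}\,\delta^{n+1} \left( \delta^{-2/m}\, \delta^{-(\sum_{j=2}^n \alpha_j)/m}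 \right)^2$ up to a fixed positive constant factor. -/

import Mathlib

open MeasureTheory
open scoped ENNReal

/-- The oscillatory integral operator
`T_{α,m} f (x) = ∫ e^{i (x₁^{α₁} y₁^m + ⋯ + xₙ^{αₙ} yₙ^m)} f(y) dy`. -/
noncomputable def oscOp {n : ℕ} (α : Fin n → ℕ) (m : ℕ)
    (f : EuclideanSpace ℝ (Fin n) → ℂ) (x : EuclideanSpace ℝ (Fin n)) : ℂ :=
  ∫ y : EuclideanSpace ℝ (Fin n),
    Complex.exp (Complex.I * Complex.ofReal (∑ j, (x j) ^ (α j) * (y j) ^ m)) * f y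

/-- The Knapp-type test function `f(y) = e^{-i y₁^m} χ_{E₁}(y₁) ∏_{j≥2} χ_{E_j}(y_j)`,
where `E₁ = [-c₁ δ^{-2/m}, c₁ δ^{-2/m}]` and `E_j = [-c_j δ^{-α_j/m}, c_j δ^{-α_j/m}]`.
Here the first coordinate is indexed by `0 : Fin n`. -/
noncomputable def knappF {n : ℕ} [NeZero n] (α : Fin n → ℕ) (m : ℕ) (c' : Fin n → ℝ)
    (δ : ℝ) (y : EuclideanSpace ℝ (Fin n)) : ℂ :=
  Complex.exp (-Complex.I * Complex.ofReal ((y 0) ^ m)) *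
    ∏ j : Fin n, Set.indicator
      (Set.Icc (-(c' j * δ ^ (-(if j = 0 then (2 : ℝ) else (α j : ℝ)) / (m : ℝ))))
        (c' j * δ ^ (-(if j = 0 then (2 : ℝ) else (α j : ℝ)) / (m : ℝ))))
      (fun _ => (1 : ℂ)) (y j)

/-- The Knapp rectangle `R_δ = {x : |x₁ - 1| ≤ c δ², |x_i| ≤ c δ (i ≥ 2)}`. -/
def knappRect (n : ℕ) [NeZero n] (c δ : ℝ) : Set (EuclideanSpace ℝ (Fin n)) :=
  {x | |x 0 - 1| ≤ c * δ ^ 2 ∧ ∀ i : Fin n, i ≠ 0 → |x i| ≤ c * δ}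

def kbox {n : ℕ} (l u : Fin n → ℝ) : Set (EuclideanSpace ℝ (Fin n)) :=
  {y | ∀ j, y j ∈ Set.Icc (l j) (u j)}

lemma kbox_eq {n : ℕ} (l u : Fin n → ℝ) :
    kbox l u = (@WithLp.ofLp 2 (Fin n → ℝ)) ⁻¹' (Set.Icc l u) := by
  ext y
  simp only [kbox, Set.mem_ofPred_eq, Set.mem_Icc, Set.mem_preimage, Pi.le_def]
  constructor
  · intro h
    exact ⟨fun j => (h j).1, fun j => (h j).2⟩
  · intro h j
    exact ⟨h.1 j, h.2 j⟩

lemma kbox_meas {n : ℕ} (l u : Fin n → ℝ) : MeasurableSet (kbox l u) := by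
  rw [kbox_eq]
  exact (PiLp.volume_preserving_ofLp (Fin n)).measurable measurableSet_Icc

lemma kbox_vol {n : ℕ} (l u : Fin n → ℝ) :
    volume (kbox l u) = ∏ j, ENNReal.ofReal (u j - l j) := by
  rw [kbox_eq, (PiLp.volume_preserving_ofLp (Fin n)).measure_preimage
    measurableSet_Icc.nullMeasurableSet, Real.volume_Icc_pi]

lemma kbox_vol_ne {n : ℕ} (l u : Fin n → ℝ) : volume (kbox l u) ≠ ⊤ := by
  rw [kbox_vol]
  exact ENNReal.prod_ne_top (fun j _ => ENNReal.ofReal_ne_top)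

lemma kbox_real {n : ℕ} (l u : Fin n → ℝ) (h : ∀ j, l j ≤ u j) :
    volume.real (kbox l u) = ∏ j, (u j - l j) := by
  rw [Measure.real, kbox_vol, ENNReal.toReal_prod]
  exact Finset.prod_congr rfl fun j _ => ENNReal.toReal_ofReal (sub_nonneg.2 (h j))

/-- phase -/
noncomputable def kphase {n : ℕ} [NeZero n] (α : Fin n → ℕ) (m : ℕ)
    (x y : EuclideanSpace ℝ (Fin n)) : ℝ :=
  (∑ j, (x j) ^ (α j) * (y j) ^ m) - (y 0) ^ m

lemma prod_ind {n : ℕ} (s : Fin n → Set ℝ) (y : EuclideanSpace ℝ (Fin n)) :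
    ∏ j, Set.indicator (s j) (fun _ => (1 : ℂ)) (y j)
      = Set.indicator {y : EuclideanSpace ℝ (Fin n) | ∀ j, y j ∈ s j} (fun _ => (1 : ℂ)) y := by
  by_cases h : ∀ j, y j ∈ s j
  · rw [Set.indicator_of_mem (by exact h)]
    exact Finset.prod_eq_one fun j _ => Set.indicator_of_mem (h j) _
  · rw [Set.indicator_of_notMem (by exact h)]
    push Not at h
    obtain ⟨j, hj⟩ := h
    exact Finset.prod_eq_zero (Finset.mem_univ j) (Set.indicator_of_notMem hj _)

lemma osc_eq {n : ℕ} [NeZero n] (α : Fin n → ℕ) (m : ℕ) (δ : ℝ) (a c' : Fin n → ℝ)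
    (ha : ∀ j, a j = c' j * δ ^ (-(if j = 0 then (2 : ℝ) else (α j : ℝ)) / (m : ℝ)))
    (x : EuclideanSpace ℝ (Fin n)) :
    oscOp α m (knappF α m c' δ) x =
      ∫ y in kbox (fun j => - a j) a, Complex.exp (Complex.I * (kphase α m x y : ℝ)) := by
  rw [← integral_indicator (kbox_meas _ _)]
  unfold oscOp knappF
  congr 1
  ext y
  rw [prod_ind]
  simp only [← ha]
  change _ * (_ * Set.indicator (kbox (fun j => - a j) a) _ y) = _
  by_cases h : y ∈ kbox (fun j => - a j) a
  · rw [Set.indicator_of_mem h, Set.indicator_of_mem h, mul_one, ← Complex.exp_add]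
    congr 1
    unfold kphase
    push_cast
    ring
  · rw [Set.indicator_of_notMem h, Set.indicator_of_notMem h]
    simp

lemma kphase_cont_y {n : ℕ} [NeZero n] (α : Fin n → ℕ) (m : ℕ) (x : EuclideanSpace ℝ (Fin n)) :
    Continuous fun y : EuclideanSpace ℝ (Fin n) =>
      Complex.exp (Complex.I * (kphase α m x y : ℝ)) := by
  unfold kphase
  fun_prop

lemma kphase_cont_x {n : ℕ} [NeZero n] (α : Fin n → ℕ) (m : ℕ) (y : EuclideanSpace ℝ (Fin n)) :
    Continuous fun x : EuclideanSpace ℝ (Fin n) =>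
      Complex.exp (Complex.I * (kphase α m x y : ℝ)) := by
  unfold kphase
  fun_prop

lemma kexp_norm (t : ℝ) : ‖Complex.exp (Complex.I * (t : ℝ))‖ = 1 := by
  rw [mul_comm]; exact Complex.norm_exp_ofReal_mul_I t

lemma osc_cont {n : ℕ} [NeZero n] (α : Fin n → ℕ) (m : ℕ) (l u : Fin n → ℝ) :
    Continuous fun x : EuclideanSpace ℝ (Fin n) =>
      ∫ y in kbox l u, Complex.exp (Complex.I * (kphase α m x y : ℝ)) := by
  refine continuous_of_dominated (bound := fun _ => 1) ?_ ?_ ?_ ?_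
  · intro x
    exact (kphase_cont_y α m x).aestronglyMeasurable
  · intro x
    exact Filter.Eventually.of_forall fun y => (kexp_norm _).le
  · exact integrableOn_const (kbox_vol_ne l u)
  · exact Filter.Eventually.of_forall fun y =>
      kphase_cont_x α m y

lemma osc_lower {n : ℕ} [NeZero n] (α : Fin n → ℕ) (m : ℕ) (l u : Fin n → ℝ)
    (x : EuclideanSpace ℝ (Fin n))
    (h : ∀ y ∈ kbox l u, |kphase α m x y| ≤ 1) :
    (1 / 2) * volume.real (kbox l u) ≤
      ‖∫ y in kbox l u, Complex.exp (Complex.I * (kphase α m x y : ℝ))‖ := by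
  have hc : Continuous fun y => Complex.exp (Complex.I * (kphase α m x y : ℝ)) :=
    kphase_cont_y α m x
  have hint : IntegrableOn (fun y => Complex.exp (Complex.I * (kphase α m x y : ℝ)))
      (kbox l u) := by
    refine Integrable.mono' (g := fun _ => (1 : ℝ)) (integrableOn_const (kbox_vol_ne l u))
      hc.aestronglyMeasurable ?_
    exact Filter.Eventually.of_forall fun y => (kexp_norm _).le
  refine le_trans ?_ (Complex.re_le_norm _)
  have e := integral_re (𝕜 := ℂ) hint
  simp only [RCLike.re_to_complex] at e
  rw [← e]
  have h1 : (1 / 2) * volume.real (kbox l u) = ∫ y in kbox l u, (1 / 2 : ℝ) := by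
    rw [setIntegral_const, smul_eq_mul, mul_comm]
  rw [h1]
  refine setIntegral_mono_on (integrableOn_const (kbox_vol_ne l u)) hint.re (kbox_meas l u) ?_
  intro y hy
  have h2 : (Complex.exp (Complex.I * (kphase α m x y : ℝ))).re = Real.cos (kphase α m x y) := by
    rw [mul_comm, Complex.exp_ofReal_mul_I_re]
  rw [h2]
  have h3 := Real.one_sub_sq_div_two_le_cos (x := kphase α m x y)
  have h4 := (sq_le_one_iff_abs_le_one _).2 (h y hy)
  linarith

lemma pow_sub_one_bound (t : ℝ) (k : ℕ) (h : |t - 1| ≤ 1) :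
    |t ^ k - 1| ≤ k * 2 ^ k * |t - 1| := by
  have ht : |t| ≤ 2 := by
    have := abs_add_le (t - 1) 1
    simp at this; linarith
  induction k with
  | zero => simp
  | succ k ih =>
    have e : t ^ (k + 1) - 1 = t * (t ^ k - 1) + (t - 1) := by ring
    rw [e]
    have h1 : |t * (t ^ k - 1)| ≤ 2 * (k * 2 ^ k * |t - 1|) := by
      rw [abs_mul]; gcongr
    have h2 := abs_add_le (t * (t ^ k - 1)) (t - 1)
    have h3 : |t - 1| ≤ 2 ^ (k + 1) * |t - 1| :=
      le_mul_of_one_le_left (abs_nonneg _) (one_le_pow₀ (by norm_num))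
    push_cast
    rw [pow_succ] at *
    nlinarith

lemma phase_bound {n : ℕ} [NeZero n] (α : Fin n → ℕ) (hα : ∀ j, 3 ≤ α j) (m : ℕ) (δ c : ℝ)
    (hδ : 0 < δ) (hδ1 : δ < 1 / 2) (hc : 0 < c) (hc1 : c ≤ 1)
    (hcc : c * (α 0 * 2 ^ (α 0) + n) ≤ 1) (a : Fin n → ℝ)
    (ha0 : a 0 ^ m * δ ^ 2 = 1) (ha : ∀ j, j ≠ 0 → a j ^ m * δ ^ (α j) = 1)
    (x : EuclideanSpace ℝ (Fin n)) (hx : x ∈ knappRect n c δ)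
    (y : EuclideanSpace ℝ (Fin n)) (hy : y ∈ kbox (fun j => - a j) a) :
    |kphase α m x y| ≤ 1 := by
  have hym : ∀ j, |y j ^ m| ≤ a j ^ m := by
    intro j
    rw [abs_pow]
    exact pow_le_pow_left₀ (abs_nonneg _) (abs_le.2 (hy j)) m
  have hA : ∀ j, 0 ≤ a j ^ m := fun j => (abs_nonneg _).trans (hym j)
  obtain ⟨hx0, hxj⟩ := hx
  have e : kphase α m x y = (x 0 ^ α 0 - 1) * y 0 ^ m +
      ∑ j ∈ Finset.univ.erase (0 : Fin n), x j ^ α j * y j ^ m := by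
    unfold kphase
    rw [← Finset.add_sum_erase _ _ (Finset.mem_univ (0 : Fin n))]
    ring
  rw [e]
  have h0 : |(x 0 ^ α 0 - 1) * y 0 ^ m| ≤ c * (α 0 * 2 ^ (α 0)) := by
    rw [abs_mul]
    have hd : c * δ ^ 2 ≤ 1 := by nlinarith
    have h1 := pow_sub_one_bound (x 0) (α 0) (hx0.trans hd)
    calc |x 0 ^ α 0 - 1| * |y 0 ^ m| ≤ (α 0 * 2 ^ (α 0) * (c * δ ^ 2)) * a 0 ^ m := by
          refine mul_le_mul (h1.trans ?_) (hym 0) (abs_nonneg _) (by positivity)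
          gcongr
      _ = c * (α 0 * 2 ^ (α 0)) * (a 0 ^ m * δ ^ 2) := by ring
      _ = _ := by rw [ha0, mul_one]
  have h1 : |∑ j ∈ Finset.univ.erase (0 : Fin n), x j ^ α j * y j ^ m| ≤ n * c := by
    refine (Finset.abs_sum_le_sum_abs _ _).trans ?_
    refine (Finset.sum_le_card_nsmul _ _ c ?_).trans ?_
    · intro j hj
      have hj0 := Finset.ne_of_mem_erase hj
      rw [abs_mul, abs_pow]
      calc |x j| ^ α j * |y j ^ m| ≤ (c * δ) ^ α j * a j ^ m := by
            refine mul_le_mul (pow_le_pow_left₀ (abs_nonneg _) (hxj j hj0) _) (hym j)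
              (abs_nonneg _) (by positivity)
        _ = c ^ α j * (a j ^ m * δ ^ α j) := by rw [mul_pow]; ring
        _ = c ^ α j := by rw [ha j hj0, mul_one]
        _ ≤ c := pow_le_of_le_one hc.le hc1 (by have := hα j; omega)
    · rw [nsmul_eq_mul]
      gcongr
      exact (Finset.card_le_univ _).trans (by simp)
  have := abs_add_le ((x 0 ^ α 0 - 1) * y 0 ^ m)
    (∑ j ∈ Finset.univ.erase (0 : Fin n), x j ^ α j * y j ^ m)
  linarith

lemma rect_eq (n : ℕ) [NeZero n] (c δ : ℝ) :
    knappRect n c δ = kbox (fun j => if j = 0 then 1 - c * δ ^ 2 else - (c * δ))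
      (fun j => if j = 0 then 1 + c * δ ^ 2 else c * δ) := by
  ext x
  simp only [knappRect, kbox, Set.mem_ofPred_eq, Set.mem_Icc, abs_le]
  constructor
  · rintro ⟨h, h'⟩ j
    by_cases hj : j = 0
    · subst hj; simp only [if_true]; constructor <;> linarith
    · simp only [hj, if_false]; exact h' j hj
  · intro h
    refine ⟨?_, fun j hj => ?_⟩
    · have := h 0; simp only [if_true] at this; constructor <;> linarith
    · have := h j; simpa only [hj, if_false] using this

lemma rect_vol (n : ℕ) [NeZero n] (c δ : ℝ) (hc : 0 < c) (hδ : 0 < δ) :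
    volume.real (knappRect n c δ) = (2 * c) ^ n * δ ^ (n + 1) := by
  have h1 : 0 < c * δ ^ 2 := by positivity
  have h2 : 0 < c * δ := by positivity
  rw [rect_eq, kbox_real]
  · rw [← Finset.mul_prod_erase _ _ (Finset.mem_univ (0 : Fin n))]
    rw [Finset.prod_congr rfl (g := fun _ => 2 * (c * δ))]
    · simp only [if_true, Finset.prod_const, Finset.card_erase_of_mem (Finset.mem_univ _),
        Finset.card_univ, Fintype.card_fin]
      obtain ⟨k, rfl⟩ := Nat.exists_eq_succ_of_ne_zero (NeZero.ne n)
      simp only [Nat.succ_eq_add_one, Nat.add_sub_cancel]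
      ring
    · intro j hj
      simp only [Finset.ne_of_mem_erase hj, if_false]; ring
  · intro j
    split_ifs <;> linarith

/-- Knapp example lower bounds: pointwise on `R_δ`,
`|T_{α,m} f(x)| ≥ (∏ c_j) δ^{-2/m} δ^{-(∑_{j≥2} α_j)/m}`, and consequently the squared
`L²` integral over `R_δ` is bounded below by
`(∏ c_j)² (2c)ⁿ δ^{n+1} (δ^{-2/m} δ^{-(∑_{j≥2} α_j)/m})²` up to a fixed constant. -/
theorem knapp_lower_bound (n : ℕ) [NeZero n] (hn : 2 ≤ n) (α : Fin n → ℕ)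
    (hα : ∀ j, 3 ≤ α j) (m : ℕ) (hm : 3 ≤ m) :
    ∃ c : ℝ, 0 < c ∧ ∃ c' : Fin n → ℝ, (∀ j, 0 < c' j) ∧ ∃ K : ℝ, 0 < K ∧
      ∀ δ : ℝ, 0 < δ → δ < 1 / 2 →
        (∀ x ∈ knappRect n c δ,
          (∏ j, c' j) * (δ ^ (-(2 / (m : ℝ))) *
              δ ^ (-(∑ j ∈ Finset.univ.erase (0 : Fin n), (α j : ℝ)) / (m : ℝ)))
            ≤ ‖oscOp α m (knappF α m c' δ) x‖) ∧
        K * ((∏ j, c' j) ^ 2 * (2 * c) ^ n * δ ^ (n + 1) *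
              (δ ^ (-(2 / (m : ℝ))) *
                δ ^ (-(∑ j ∈ Finset.univ.erase (0 : Fin n), (α j : ℝ)) / (m : ℝ))) ^ 2)
          ≤ ∫ x in knappRect n c δ, ‖oscOp α m (knappF α m c' δ) x‖ ^ 2 := by
  have hmR : (m : ℝ) ≠ 0 := by
    have : m ≠ 0 := by omega
    exact_mod_cast this
  set D : ℝ := α 0 * 2 ^ (α 0) + n with hD
  have hn1 : (1 : ℝ) ≤ n := by exact_mod_cast (by omega : 1 ≤ n)
  have hD1 : 1 ≤ D := by
    have : (0 : ℝ) ≤ α 0 * 2 ^ (α 0) := by positivity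
    linarith
  have hD0 : 0 < D := by linarith
  have hc : 0 < D⁻¹ := inv_pos.2 hD0
  refine ⟨D⁻¹, hc, fun _ => 1, fun _ => one_pos, 1, one_pos, ?_⟩
  intro δ hδ hδ1
  set a : Fin n → ℝ := fun j => δ ^ (-(if j = 0 then (2 : ℝ) else (α j : ℝ)) / (m : ℝ)) with hadef
  have hapos : ∀ j, 0 < a j := fun j => Real.rpow_pos_of_pos hδ _
  have hT := osc_eq α m δ a (fun _ => 1) (fun j => by simp [hadef])
  have ham : ∀ j, a j ^ m = δ ^ (-(if j = 0 then (2 : ℝ) else (α j : ℝ))) := by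
    intro j
    rw [← Real.rpow_natCast, ← Real.rpow_mul hδ.le, div_mul_cancel₀ _ hmR]
  have ha0 : a 0 ^ m * δ ^ 2 = 1 := by
    rw [ham, if_pos rfl, ← Real.rpow_natCast δ 2, ← Real.rpow_add hδ]
    simp
  have ha1 : ∀ j, j ≠ 0 → a j ^ m * δ ^ (α j) = 1 := by
    intro j hj
    rw [ham, if_neg hj, ← Real.rpow_natCast δ (α j), ← Real.rpow_add hδ]
    simp
  have hprod : δ ^ (-(2 / (m : ℝ))) *
      δ ^ (-(∑ j ∈ Finset.univ.erase (0 : Fin n), (α j : ℝ)) / (m : ℝ)) = ∏ j, a j := by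
    rw [← Finset.mul_prod_erase _ _ (Finset.mem_univ (0 : Fin n))]
    congr 1
    · simp only [hadef, if_true]; rw [neg_div]
    · rw [← Finset.sum_neg_distrib, Finset.sum_div, Real.rpow_sum_of_pos hδ]
      refine Finset.prod_congr rfl fun j hj => ?_
      simp only [hadef, Finset.ne_of_mem_erase hj, if_false]
  rw [hprod]
  have hP : 0 < ∏ j, a j := Finset.prod_pos fun j _ => hapos j
  have hpt : ∀ x ∈ knappRect n D⁻¹ δ, ∏ j, a j ≤ ‖oscOp α m (knappF α m (fun _ => 1) δ) x‖ := by
    intro x hx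
    rw [hT]
    refine le_trans ?_ (osc_lower α m _ _ x fun y hy =>
      phase_bound α hα m δ D⁻¹ hδ hδ1 hc (inv_le_one_of_one_le₀ hD1)
        (inv_mul_cancel₀ hD0.ne').le a ha0 ha1 x hx y hy)
    rw [kbox_real _ _ (fun j => by have := hapos j; linarith)]
    have e : ∏ j, (a j - -a j) = 2 ^ n * ∏ j, a j := by
      rw [Finset.prod_congr rfl (g := fun j => 2 * a j) (fun j _ => by ring),
        Finset.prod_mul_distrib]
      simp
    rw [e]
    have h2 : (2 : ℝ) ≤ 2 ^ n := le_self_pow₀ (by norm_num) (by omega)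
    nlinarith
  refine ⟨fun x hx => by simpa using hpt x hx, ?_⟩
  have hfin : volume (knappRect n D⁻¹ δ) ≠ ⊤ := by rw [rect_eq]; exact kbox_vol_ne _ _
  have hms : MeasurableSet (knappRect n D⁻¹ δ) := by rw [rect_eq]; exact kbox_meas _ _
  have hlhs : 1 * ((∏ _j : Fin n, (1 : ℝ)) ^ 2 * (2 * D⁻¹) ^ n * δ ^ (n + 1) * (∏ j, a j) ^ 2)
      = ∫ x in knappRect n D⁻¹ δ, (∏ j, a j) ^ 2 := by
    rw [setIntegral_const, rect_vol n _ _ hc hδ, smul_eq_mul]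
    simp
  rw [hlhs]
  refine setIntegral_mono_on (integrableOn_const hfin) ?_ hms fun x hx =>
    pow_le_pow_left₀ hP.le (hpt x hx) 2
  simp only [hT]
  refine Integrable.mono' (g := fun _ => (volume.real (kbox (fun j => - a j) a)) ^ 2)
    (integrableOn_const hfin)
    ((osc_cont α m _ _).norm.pow 2).aestronglyMeasurable ?_
  refine Filter.Eventually.of_forall fun x => ?_
  rw [Real.norm_of_nonneg (by positivity)]
  refine pow_le_pow_left₀ (norm_nonneg _) ?_ 2
  have := norm_setIntegral_le_of_norm_le_const (C := 1) (kbox_vol_ne (fun j => - a j) a).lt_top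
    (f := fun y => Complex.exp (Complex.I * (kphase α m x y : ℝ)))
    (fun y _ => (kexp_norm _).le)
  simpa using this
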